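/- arXiv:1410.2499 — 17 statements merged into one kernel-verified Lean document; each statement's English description precedes it below -/
import Mathlib

section
/- For any Moreau–Jean step, the discrete-time dissipation equality holds: E(q_{k+1},v_{k+1}) − E(q_k,v_k) − W_ext − W_damp = (1/2 − θ)·( ‖v_{k+1}−v_k‖²_M + ‖q_{k+1}−q_k‖²_K ) + U_{k+θ}ᵀ P_{k+1}, where U_{k+θ} = (1−θ)U_k + θ U_{k+1}. -/
open Matrix

theorem theta_identity_aux {n : ℕ} (A : Matrix (Fin n) (Fin n) ℝ) (hA : A.IsHermitian)
    (θ : ℝ) (a b : Fin n → ℝ) :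
    1/2 * (b ⬝ᵥ A.mulVec b) - 1/2 * (a ⬝ᵥ A.mulVec a)
      = (1/2 - θ) * ((b - a) ⬝ᵥ A.mulVec (b - a))
        + ((1 - θ) • a + θ • b) ⬝ᵥ A.mulVec (b - a) ∧
    a ⬝ᵥ A.mulVec b = b ⬝ᵥ A.mulVec a := by
  have hs : a ⬝ᵥ A.mulVec b = b ⬝ᵥ A.mulVec a := by
    have hT : Aᵀ = A := by simpa [Matrix.IsHermitian, conjTranspose_eq_transpose_of_trivial] using hA
    rw [dotProduct_mulVec, ← mulVec_transpose, hT, dotProduct_comm]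
  refine ⟨?_, hs⟩
  simp only [mulVec_sub, dotProduct_sub, sub_dotProduct, add_dotProduct, smul_dotProduct,
    smul_eq_mul, hs]
  ring

/-- Discrete-time dissipation equality of the Moreau–Jean scheme over one step. -/
theorem moreau_jean_dissipation_equality
    (n m : ℕ) (hn : 1 ≤ n) (hm : 1 ≤ m)
    (h θ : ℝ) (hh : 0 < h) (hθ0 : 0 ≤ θ) (hθ1 : θ ≤ 1)
    (M K C : Matrix (Fin n) (Fin n) ℝ) (G : Matrix (Fin n) (Fin m) ℝ)
    (hM : M.PosDef) (hK : K.PosSemidef)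
    (qk qk1 vk vk1 Fθ : Fin n → ℝ) (P : Fin m → ℝ)
    (heq : M.mulVec (vk1 - vk) + h • K.mulVec ((1 - θ) • qk + θ • qk1)
        + h • C.mulVec ((1 - θ) • vk + θ • vk1) - h • Fθ = G.mulVec P)
    (hq : qk1 = qk + h • ((1 - θ) • vk + θ • vk1)) :
    (1/2 * (vk1 ⬝ᵥ M.mulVec vk1) + 1/2 * (qk1 ⬝ᵥ K.mulVec qk1))
      - (1/2 * (vk ⬝ᵥ M.mulVec vk) + 1/2 * (qk ⬝ᵥ K.mulVec qk))
      - h * (((1 - θ) • vk + θ • vk1) ⬝ᵥ Fθ)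
      - (-(h * (((1 - θ) • vk + θ • vk1) ⬝ᵥ C.mulVec ((1 - θ) • vk + θ • vk1))))
    = (1/2 - θ) * ((vk1 - vk) ⬝ᵥ M.mulVec (vk1 - vk)
        + (qk1 - qk) ⬝ᵥ K.mulVec (qk1 - qk))
      + ((1 - θ) • (Gᵀ.mulVec vk) + θ • (Gᵀ.mulVec vk1)) ⬝ᵥ P := by
  have h1 := (theta_identity_aux M hM.isHermitian θ vk vk1).1
  have h2 := (theta_identity_aux K hK.isHermitian θ qk qk1).1
  have h3 := (theta_identity_aux K hK.isHermitian θ ((1 - θ) • qk + θ • qk1) (qk1 - qk)).2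
  have hU : ((1 - θ) • (Gᵀ.mulVec vk) + θ • (Gᵀ.mulVec vk1)) ⬝ᵥ P
      = ((1 - θ) • vk + θ • vk1) ⬝ᵥ G.mulVec P := by
    rw [dotProduct_mulVec, ← mulVec_transpose, mulVec_add, mulVec_smul, mulVec_smul]
  have hd : qk1 - qk = h • ((1 - θ) • vk + θ • vk1) := by rw [hq]; simp
  have h4 : (qk1 - qk) ⬝ᵥ K.mulVec ((1 - θ) • qk + θ • qk1)
      = h * (((1 - θ) • vk + θ • vk1) ⬝ᵥ K.mulVec ((1 - θ) • qk + θ • qk1)) := by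
    rw [hd, smul_dotProduct, smul_eq_mul]
  rw [hU, ← heq, dotProduct_sub, dotProduct_add, dotProduct_add, dotProduct_smul,
    dotProduct_smul, dotProduct_smul]
  simp only [smul_eq_mul]
  linarith
end

section
/- For a Moreau–Jean step whose local velocities and impulse satisfy the discrete contact conditions, one has U_{k+θ}ᵀ P_{k+1} = Σ_{α ∈ I₁} (1 − θ(1+e^α)) U^α_k P^α_{k+1}; consequently, if θ ≤ 1/(1+e^α) for every α ∈ I₁, then U_{k+θ}ᵀ P_{k+1} ≤ 0, where U_{k+θ} = (1−θ)U_k + θ U_{k+1}. -/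
open Matrix BigOperators

/-- For a Moreau–Jean step satisfying the discrete contact conditions,
`U_{k+θ}ᵀ P_{k+1} = Σ_{α ∈ I₁} (1 − θ(1+eα)) U_kα P_{k+1}α`, and if
`θ ≤ 1/(1+eα)` for every `α ∈ I₁` then `U_{k+θ}ᵀ P_{k+1} ≤ 0`. -/
theorem moreau_jean_contact_work
    (n m : ℕ) (hn : 1 ≤ n) (hm : 1 ≤ m)
    (h θ : ℝ) (hh : 0 < h) (hθ0 : 0 ≤ θ) (hθ1 : θ ≤ 1)
    (M K C : Matrix (Fin n) (Fin n) ℝ) (G : Matrix (Fin n) (Fin m) ℝ)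
    (hM : M.PosDef) (hK : K.PosSemidef)
    (qk qk1 vk vk1 Fθ : Fin n → ℝ) (P : Fin m → ℝ)
    (heq : M.mulVec (vk1 - vk) + h • K.mulVec ((1 - θ) • qk + θ • qk1)
        + h • C.mulVec ((1 - θ) • vk + θ • vk1) - h • Fθ = G.mulVec P)
    (hq : qk1 = qk + h • ((1 - θ) • vk + θ • vk1))
    (e : Fin m → ℝ) (I₁ : Finset (Fin m))
    (he : ∀ α, 0 ≤ e α ∧ e α ≤ 1)
    (hPout : ∀ α ∉ I₁, P α = 0)
    (hc : ∀ α ∈ I₁, Gᵀ.mulVec vk α ≤ 0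
        ∧ 0 ≤ Gᵀ.mulVec vk1 α + e α * Gᵀ.mulVec vk α
        ∧ 0 ≤ P α
        ∧ (Gᵀ.mulVec vk1 α + e α * Gᵀ.mulVec vk α) * P α = 0) :
    ((1 - θ) • (Gᵀ.mulVec vk) + θ • (Gᵀ.mulVec vk1)) ⬝ᵥ P
      = ∑ α ∈ I₁, (1 - θ * (1 + e α)) * Gᵀ.mulVec vk α * P α
    ∧ ((∀ α ∈ I₁, θ ≤ 1 / (1 + e α)) →
        ((1 - θ) • (Gᵀ.mulVec vk) + θ • (Gᵀ.mulVec vk1)) ⬝ᵥ P ≤ 0) := by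
  have key : ((1 - θ) • (Gᵀ.mulVec vk) + θ • (Gᵀ.mulVec vk1)) ⬝ᵥ P
      = ∑ α ∈ I₁, (1 - θ * (1 + e α)) * Gᵀ.mulVec vk α * P α := by
    unfold dotProduct
    rw [← Finset.sum_subset (Finset.subset_univ I₁)
      (fun α _ hα => by rw [hPout α hα, mul_zero])]
    refine Finset.sum_congr rfl fun α hα => ?_
    obtain ⟨_, _, _, h4⟩ := hc α hα
    simp only [Pi.add_apply, Pi.smul_apply, smul_eq_mul]
    linear_combination θ * h4
  refine ⟨key, fun hθ => ?_⟩
  rw [key]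
  refine Finset.sum_nonpos fun α hα => ?_
  obtain ⟨h1, _, h3, _⟩ := hc α hα
  have hpos : 0 < 1 + e α := by linarith [(he α).1]
  have h5 : θ * (1 + e α) ≤ 1 := (le_div_iff₀ hpos).mp (hθ α hα)
  exact mul_nonpos_of_nonpos_of_nonneg
    (mul_nonpos_of_nonneg_of_nonpos (by linarith) h1) h3
end

section
/- Any Moreau–Jean step whose local velocities and impulse satisfy the discrete contact conditions dissipates energy in the sense that E(q_{k+1},v_{k+1}) − E(q_k,v_k) ≤ W_ext + W_damp, provided 1/2 ≤ θ ≤ 1/(1+e^α) for every α ∈ I₁. -/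
open Matrix

theorem mj_symm {n : ℕ} (A : Matrix (Fin n) (Fin n) ℝ) (hA : A.PosSemidef) (a b : Fin n → ℝ) :
    a ⬝ᵥ A.mulVec b = b ⬝ᵥ A.mulVec a := by
  have ht : Aᵀ = A := by
    have := hA.isHermitian.eq
    rwa [Matrix.conjTranspose_eq_transpose_of_trivial] at this
  rw [Matrix.dotProduct_mulVec, dotProduct_comm, ← Matrix.mulVec_transpose, ht]

theorem mj_quad {n : ℕ} (A : Matrix (Fin n) (Fin n) ℝ) (hA : A.PosSemidef) (a b : Fin n → ℝ)
    (θ : ℝ) (hθ : 1/2 ≤ θ) :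
    1/2 * (b ⬝ᵥ A.mulVec b) - 1/2 * (a ⬝ᵥ A.mulVec a)
      ≤ ((1 - θ) • a + θ • b) ⬝ᵥ A.mulVec (b - a) := by
  have h0 : 0 ≤ (b - a) ⬝ᵥ A.mulVec (b - a) := by
    simpa using hA.dotProduct_mulVec_nonneg (b - a)
  have h1 := mj_symm A hA a b
  have h2 := mul_nonneg (sub_nonneg.2 hθ) h0
  simp only [Matrix.mulVec_sub, sub_dotProduct, dotProduct_sub, add_dotProduct, smul_dotProduct,
    smul_eq_mul] at h2 ⊢
  rw [h1] at h2 ⊢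
  linarith

/-- The Moreau–Jean scheme dissipates energy when `1/2 ≤ θ ≤ 1/(1+eα)` for all contacts. -/
theorem moreau_jean_dissipates
    (n m : ℕ) (hn : 1 ≤ n) (hm : 1 ≤ m)
    (h θ : ℝ) (hh : 0 < h) (hθ0 : 0 ≤ θ) (hθ1 : θ ≤ 1)
    (M K C : Matrix (Fin n) (Fin n) ℝ) (G : Matrix (Fin n) (Fin m) ℝ)
    (hM : M.PosDef) (hK : K.PosSemidef)
    (qk qk1 vk vk1 Fθ : Fin n → ℝ) (P : Fin m → ℝ)
    (heq : M.mulVec (vk1 - vk) + h • K.mulVec ((1 - θ) • qk + θ • qk1)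
        + h • C.mulVec ((1 - θ) • vk + θ • vk1) - h • Fθ = G.mulVec P)
    (hq : qk1 = qk + h • ((1 - θ) • vk + θ • vk1))
    (e : Fin m → ℝ) (I₁ : Finset (Fin m))
    (he : ∀ α, 0 ≤ e α ∧ e α ≤ 1)
    (hPout : ∀ α ∉ I₁, P α = 0)
    (hc : ∀ α ∈ I₁, Gᵀ.mulVec vk α ≤ 0
        ∧ 0 ≤ Gᵀ.mulVec vk1 α + e α * Gᵀ.mulVec vk α
        ∧ 0 ≤ P α
        ∧ (Gᵀ.mulVec vk1 α + e α * Gᵀ.mulVec vk α) * P α = 0)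
    (hθhalf : 1/2 ≤ θ) (hθe : ∀ α ∈ I₁, θ ≤ 1 / (1 + e α)) :
    (1/2 * (vk1 ⬝ᵥ M.mulVec vk1) + 1/2 * (qk1 ⬝ᵥ K.mulVec qk1))
      - (1/2 * (vk ⬝ᵥ M.mulVec vk) + 1/2 * (qk ⬝ᵥ K.mulVec qk))
    ≤ h * (((1 - θ) • vk + θ • vk1) ⬝ᵥ Fθ)
      + (-(h * (((1 - θ) • vk + θ • vk1) ⬝ᵥ C.mulVec ((1 - θ) • vk + θ • vk1)))) := by
  have h1 := mj_quad M hM.posSemidef vk vk1 θ hθhalf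
  have h2 := mj_quad K hK qk qk1 θ hθhalf
  have hd : qk1 - qk = h • ((1 - θ) • vk + θ • vk1) := by rw [hq]; simp
  rw [hd, mj_symm K hK ((1 - θ) • qk + θ • qk1), smul_dotProduct] at h2
  have hP : ((1 - θ) • vk + θ • vk1) ⬝ᵥ G.mulVec P ≤ 0 := by
    rw [Matrix.dotProduct_mulVec, ← Matrix.mulVec_transpose, Matrix.mulVec_add,
      Matrix.mulVec_smul, Matrix.mulVec_smul]
    apply Finset.sum_nonpos
    intro α _
    simp only [Pi.add_apply, Pi.smul_apply, smul_eq_mul]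
    by_cases hα : α ∈ I₁
    · obtain ⟨c1, c2, c3, c4⟩ := hc α hα
      have hpos : 0 < 1 + e α := by linarith [(he α).1]
      have ht := hθe α hα
      rw [le_div_iff₀ hpos] at ht
      have h3 := mul_nonneg (mul_nonneg (sub_nonneg.2 ht) (neg_nonneg.2 c1)) c3
      linear_combination h3 + θ * c4
    · rw [hPout α hα, mul_zero]
  rw [← heq] at hP
  generalize (1 - θ) • vk + θ • vk1 = w at *
  simp only [dotProduct_sub, dotProduct_add, dotProduct_smul,
    smul_eq_mul] at *
  linarith
end

section
/- For any Moreau–Jean step, the discrete energy variation can also be written as E(q_{k+1},v_{k+1}) − E(q_k,v_k) − W_ext − W_damp = (1/2 − θ)·( ‖v_{k+1}−v_k‖²_M + ‖q_{k+1}−q_k‖²_K − P_{k+1}ᵀ(U_{k+1}−U_k) ) + P_{k+1}ᵀ U_{k+1/2}. -/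
open Matrix

/-- Alternative form of the discrete energy balance of the Moreau–Jean scheme. -/
theorem moreau_jean_energy_alternative_form
    (n m : ℕ) (hn : 1 ≤ n) (hm : 1 ≤ m)
    (h θ : ℝ) (hh : 0 < h) (hθ0 : 0 ≤ θ) (hθ1 : θ ≤ 1)
    (M K C : Matrix (Fin n) (Fin n) ℝ) (G : Matrix (Fin n) (Fin m) ℝ)
    (hM : M.PosDef) (hK : K.PosSemidef)
    (qk qk1 vk vk1 Fθ : Fin n → ℝ) (P : Fin m → ℝ)
    (heq : M.mulVec (vk1 - vk) + h • K.mulVec ((1 - θ) • qk + θ • qk1)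
        + h • C.mulVec ((1 - θ) • vk + θ • vk1) - h • Fθ = G.mulVec P)
    (hq : qk1 = qk + h • ((1 - θ) • vk + θ • vk1)) :
    (1/2 * (vk1 ⬝ᵥ M.mulVec vk1) + 1/2 * (qk1 ⬝ᵥ K.mulVec qk1))
      - (1/2 * (vk ⬝ᵥ M.mulVec vk) + 1/2 * (qk ⬝ᵥ K.mulVec qk))
      - h * (((1 - θ) • vk + θ • vk1) ⬝ᵥ Fθ)
      - (-(h * (((1 - θ) • vk + θ • vk1) ⬝ᵥ C.mulVec ((1 - θ) • vk + θ • vk1))))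
    = (1/2 - θ) * ((vk1 - vk) ⬝ᵥ M.mulVec (vk1 - vk)
        + (qk1 - qk) ⬝ᵥ K.mulVec (qk1 - qk)
        - P ⬝ᵥ (Gᵀ.mulVec vk1 - Gᵀ.mulVec vk))
      + P ⬝ᵥ ((1/2 : ℝ) • (Gᵀ.mulVec vk + Gᵀ.mulVec vk1)) := by
  have symm : ∀ A : Matrix (Fin n) (Fin n) ℝ, A.IsHermitian →
      ∀ x y : Fin n → ℝ, x ⬝ᵥ A.mulVec y = y ⬝ᵥ A.mulVec x := by
    intro A hA x y
    have hT : Aᵀ = A := by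
      simpa [Matrix.IsHermitian, Matrix.conjTranspose_eq_transpose_of_trivial] using hA
    rw [Matrix.dotProduct_mulVec, dotProduct_comm, ← Matrix.mulVec_transpose, hT]
  have hMs := symm M hM.isHermitian vk vk1
  have hKs := symm K hK.isHermitian qk qk1
  have hG : ∀ x : Fin n → ℝ, P ⬝ᵥ Gᵀ.mulVec x = x ⬝ᵥ G.mulVec P := by
    intro x
    rw [Matrix.mulVec_transpose, Matrix.dotProduct_mulVec, dotProduct_comm]
  have hdot := congrArg (fun z => ((1 - θ) • vk + θ • vk1) ⬝ᵥ z) heq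
  have hdq := congrArg (fun z => z ⬝ᵥ K.mulVec ((1 - θ) • qk + θ • qk1)) hq
  simp only [dotProduct_add, dotProduct_sub, add_dotProduct, sub_dotProduct, dotProduct_smul,
    smul_dotProduct, Matrix.mulVec_add, Matrix.mulVec_sub, Matrix.mulVec_smul, smul_eq_mul,
    hG] at hdot hdq ⊢
  linear_combination hdot + hdq - (1/2) * hMs + (1/2) * hKs
end

section
/- If local velocities U_k, U_{k+1} ∈ ℝᵐ and an impulse P_{k+1} ∈ ℝᵐ satisfy the discrete contact conditions, then −P_{k+1}ᵀ(U_{k+1}−U_k) = Σ_{α ∈ I₁} (1+e^α) P^α_{k+1} U^α_k ≤ 0. -/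
open Matrix BigOperators

/-- Under the discrete contact conditions,
`−P_{k+1}ᵀ(U_{k+1}−U_k) = Σ_{α ∈ I₁} (1+eα) P_{k+1}α U_kα ≤ 0`. -/
theorem discrete_contact_velocity_jump_work
    (m : ℕ) (hm : 1 ≤ m)
    (Uk Uk1 P : Fin m → ℝ)
    (e : Fin m → ℝ) (I₁ : Finset (Fin m))
    (he : ∀ α, 0 ≤ e α ∧ e α ≤ 1)
    (hPout : ∀ α ∉ I₁, P α = 0)
    (hc : ∀ α ∈ I₁, Uk α ≤ 0
        ∧ 0 ≤ Uk1 α + e α * Uk α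
        ∧ 0 ≤ P α
        ∧ (Uk1 α + e α * Uk α) * P α = 0) :
    -(P ⬝ᵥ (Uk1 - Uk)) = ∑ α ∈ I₁, (1 + e α) * P α * Uk α
    ∧ -(P ⬝ᵥ (Uk1 - Uk)) ≤ 0 := by
  have h : -(P ⬝ᵥ (Uk1 - Uk)) = ∑ α ∈ I₁, (1 + e α) * P α * Uk α := by
    have h1 : P ⬝ᵥ (Uk1 - Uk) = ∑ α ∈ I₁, P α * (Uk1 - Uk) α := by
      unfold dotProduct
      symm
      apply Finset.sum_subset (Finset.subset_univ _)
      intro α _ hα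
      rw [hPout α hα, zero_mul]
    rw [h1, ← Finset.sum_neg_distrib]
    apply Finset.sum_congr rfl
    intro α hα
    obtain ⟨_, _, _, h4⟩ := hc α hα
    rw [Pi.sub_apply]
    linear_combination -h4
  refine ⟨h, ?_⟩
  rw [h]
  apply Finset.sum_nonpos
  intro α hα
  obtain ⟨h1, _, h3, _⟩ := hc α hα
  have h0 := (he α).1
  exact mul_nonpos_of_nonneg_of_nonpos (mul_nonneg (by linarith) h3) h1
end

section
/- For a Moreau–Jean step with θ = 1/2 whose local velocities and impulse satisfy the discrete contact conditions, the discrete energy balance reduces to E(q_{k+1},v_{k+1}) − E(q_k,v_k) − W_ext − W_damp = P_{k+1}ᵀ U_{k+1/2} ≤ 0; in particular the scheme is always dissipative for θ = 1/2. -/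
open Matrix

lemma quad_diff {n : ℕ} (A : Matrix (Fin n) (Fin n) ℝ) (hA : Aᵀ = A) (a b : Fin n → ℝ) :
    1/2 * (b ⬝ᵥ A.mulVec b) - 1/2 * (a ⬝ᵥ A.mulVec a)
      = ((1/2 : ℝ) • a + (1/2 : ℝ) • b) ⬝ᵥ A.mulVec (b - a) := by
  have hs : a ⬝ᵥ A.mulVec b = b ⬝ᵥ A.mulVec a := by
    rw [Matrix.dotProduct_mulVec, ← Matrix.mulVec_transpose, hA, dotProduct_comm]
  simp only [Matrix.mulVec_sub, add_dotProduct, dotProduct_sub, smul_dotProduct, smul_eq_mul]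
  linarith

lemma quad_diff' {n : ℕ} (A : Matrix (Fin n) (Fin n) ℝ) (hA : Aᵀ = A) (a b : Fin n → ℝ) :
    1/2 * (b ⬝ᵥ A.mulVec b) - 1/2 * (a ⬝ᵥ A.mulVec a)
      = (b - a) ⬝ᵥ A.mulVec ((1/2 : ℝ) • a + (1/2 : ℝ) • b) := by
  rw [quad_diff A hA, Matrix.dotProduct_mulVec, ← Matrix.mulVec_transpose, hA, dotProduct_comm]

/-- For `θ = 1/2`, the Moreau–Jean scheme energy balance reduces to the
(nonpositive) work of the contact impulses: it is always dissipative. -/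
theorem moreau_jean_theta_half_dissipative
    (n m : ℕ) (hn : 1 ≤ n) (hm : 1 ≤ m)
    (h : ℝ) (hh : 0 < h)
    (M K C : Matrix (Fin n) (Fin n) ℝ) (G : Matrix (Fin n) (Fin m) ℝ)
    (hM : M.PosDef) (hK : K.PosSemidef)
    (qk qk1 vk vk1 Fθ : Fin n → ℝ) (P : Fin m → ℝ)
    (heq : M.mulVec (vk1 - vk) + h • K.mulVec ((1/2 : ℝ) • qk + (1/2 : ℝ) • qk1)
        + h • C.mulVec ((1/2 : ℝ) • vk + (1/2 : ℝ) • vk1) - h • Fθ = G.mulVec P)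
    (hq : qk1 = qk + h • ((1/2 : ℝ) • vk + (1/2 : ℝ) • vk1))
    (e : Fin m → ℝ) (I₁ : Finset (Fin m))
    (he : ∀ α, 0 ≤ e α ∧ e α ≤ 1)
    (hPout : ∀ α ∉ I₁, P α = 0)
    (hc : ∀ α ∈ I₁, Gᵀ.mulVec vk α ≤ 0
        ∧ 0 ≤ Gᵀ.mulVec vk1 α + e α * Gᵀ.mulVec vk α
        ∧ 0 ≤ P α
        ∧ (Gᵀ.mulVec vk1 α + e α * Gᵀ.mulVec vk α) * P α = 0) :
    (1/2 * (vk1 ⬝ᵥ M.mulVec vk1) + 1/2 * (qk1 ⬝ᵥ K.mulVec qk1))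
      - (1/2 * (vk ⬝ᵥ M.mulVec vk) + 1/2 * (qk ⬝ᵥ K.mulVec qk))
      - h * (((1/2 : ℝ) • vk + (1/2 : ℝ) • vk1) ⬝ᵥ Fθ)
      - (-(h * (((1/2 : ℝ) • vk + (1/2 : ℝ) • vk1) ⬝ᵥ
          C.mulVec ((1/2 : ℝ) • vk + (1/2 : ℝ) • vk1))))
    = P ⬝ᵥ ((1/2 : ℝ) • (Gᵀ.mulVec vk + Gᵀ.mulVec vk1))
    ∧ P ⬝ᵥ ((1/2 : ℝ) • (Gᵀ.mulVec vk + Gᵀ.mulVec vk1)) ≤ 0 := by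
  constructor
  · have h1 := quad_diff M (by simpa using hM.isHermitian.eq) vk vk1
    have h2 := quad_diff' K (by simpa using hK.isHermitian.eq) qk qk1
    have hqd : qk1 - qk = h • ((1/2 : ℝ) • vk + (1/2 : ℝ) • vk1) := by
      rw [hq]; simp
    rw [hqd] at h2
    have hU : (1/2 : ℝ) • (Gᵀ.mulVec vk + Gᵀ.mulVec vk1)
        = Gᵀ.mulVec ((1/2 : ℝ) • vk + (1/2 : ℝ) • vk1) := by
      rw [Matrix.mulVec_add, Matrix.mulVec_smul, Matrix.mulVec_smul, smul_add]
    rw [hU]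
    generalize (1/2 : ℝ) • vk + (1/2 : ℝ) • vk1 = w at *
    have h3 := congrArg (fun x => w ⬝ᵥ x) heq
    simp only [dotProduct_add, dotProduct_sub, dotProduct_smul, smul_eq_mul] at h3
    have h4 : P ⬝ᵥ Gᵀ.mulVec w = w ⬝ᵥ G.mulVec P := by
      rw [Matrix.mulVec_transpose, dotProduct_comm, ← Matrix.dotProduct_mulVec]
    rw [h4]
    simp only [dotProduct_add, smul_dotProduct, smul_eq_mul] at h1 h2
    linarith
  · apply Finset.sum_nonpos
    intro α _
    simp only [Pi.smul_apply, Pi.add_apply, smul_eq_mul]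
    by_cases hα : α ∈ I₁
    · obtain ⟨h1, h2, h3, h4⟩ := hc α hα
      have h5 := mul_nonneg (mul_nonneg h3 (sub_nonneg.2 (he α).2)) (neg_nonneg.2 h1)
      linarith
    · simp [hPout α hα]
end

section
/- If 2β = γ = θ, then any solution of the two-equation form of the nonsmooth Newmark scheme satisfies q_{k+1} = q_k + h·(1/2)(v_k + v_{k+1}) and M(v_{k+1}−v_k) + hK q_{k+θ} + hC v_{k+θ} − hF_{k+θ} = G P_{k+1}; that is, the nonsmooth Newmark scheme with 2β = γ = θ coincides with the variant of the Moreau–Jean scheme in which the position update uses the midpoint velocity. -/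
open Matrix

/-- With `2β = γ = θ`, the two-equation form of the nonsmooth Newmark scheme
coincides with the variant of the Moreau–Jean scheme whose position update uses
the midpoint velocity. -/
theorem nonsmooth_newmark_is_moreau_jean_variant
    (n m : ℕ) (hn : 1 ≤ n) (hm : 1 ≤ m)
    (h γ β θ : ℝ) (hh : 0 < h)
    (M K C : Matrix (Fin n) (Fin n) ℝ) (G : Matrix (Fin n) (Fin m) ℝ)
    (hMs : M.IsSymm) (hMdet : IsUnit M.det)
    (qk qk1 vk vk1 Fk Fk1 : Fin n → ℝ) (P : Fin m → ℝ)
    (hβγ : 2 * β = γ) (hγθ : γ = θ)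
    (h1 : M.mulVec (vk1 - vk)
        = h • (((1 - γ) • Fk + γ • Fk1)
            - K.mulVec ((1 - γ) • qk + γ • qk1)
            - C.mulVec ((1 - γ) • vk + γ • vk1)) + G.mulVec P)
    (h2 : qk1 = qk + h • vk + (h / 2) • (M⁻¹.mulVec
        (h • (((1 - 2 * β) • Fk + (2 * β) • Fk1)
            - K.mulVec ((1 - 2 * β) • qk + (2 * β) • qk1)
            - C.mulVec ((1 - 2 * β) • vk + (2 * β) • vk1)) + G.mulVec P))) :
    qk1 = qk + h • ((1/2 : ℝ) • (vk + vk1))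
    ∧ M.mulVec (vk1 - vk) + h • K.mulVec ((1 - θ) • qk + θ • qk1)
        + h • C.mulVec ((1 - θ) • vk + θ • vk1)
        - h • ((1 - θ) • Fk + θ • Fk1) = G.mulVec P := by
  rw [hβγ, ← h1, Matrix.mulVec_mulVec, Matrix.nonsing_inv_mul M hMdet,
    Matrix.one_mulVec] at h2
  subst hγθ
  constructor
  · refine h2.trans ?_
    module
  · rw [h1]
    module
end

section
/- For any step of the nonsmooth generalized-α scheme written in augmented Newmark form with filter parameters ν ≠ 0 and η, the variation of the algorithmic energy satisfies H(q_{k+1},v_{k+1},a_{k+1},z_{k+1}) − H(q_k,v_k,a_k,z_k) − W_ext − W_damp + (η/ν)·(q_{k+1}−q_k)ᵀ( y_{k,γ} − C x_{k,γ} ) = U_{k+1/2}ᵀ P_{k+1} + (1/2)h²(1/2 − γ)(2β − γ)‖a_{k+1}−a_k‖²_M + (η + 1/2 − γ)‖q_{k+1}−q_k‖²_K + (η/ν)(γ − ν − 1/2)‖z_{k+1}−z_k‖²_K. -/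
open Matrix

lemma symm_dot {n : ℕ} {A : Matrix (Fin n) (Fin n) ℝ} (hA : A.IsHermitian) (x y : Fin n → ℝ) :
    x ⬝ᵥ A.mulVec y = y ⬝ᵥ A.mulVec x := by
  have hT : Aᵀ = A := by simpa [Matrix.IsHermitian] using hA
  rw [dotProduct_mulVec, ← mulVec_transpose, hT, dotProduct_comm]

/-- Variation of the algorithmic energy over one step of the nonsmooth
generalized-α scheme written in augmented Newmark form with filters. -/
theorem nonsmooth_generalized_alpha_algorithmic_energy
    (n m : ℕ) (hn : 1 ≤ n) (hm : 1 ≤ m)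
    (h γ β η ν : ℝ) (hh : 0 < h) (hν : ν ≠ 0)
    (M K C : Matrix (Fin n) (Fin n) ℝ) (G : Matrix (Fin n) (Fin m) ℝ)
    (hM : M.PosDef) (hK : K.PosSemidef)
    (qk qk1 vk vk1 ak ak1 Fk Fk1 zk zk1 xk xk1 yk yk1 w : Fin n → ℝ)
    (P : Fin m → ℝ)
    (hbalk : M.mulVec ak + K.mulVec qk + C.mulVec vk
        = Fk + (η / ν) • (K.mulVec zk + C.mulVec xk - yk))
    (hbalk1 : M.mulVec ak1 + K.mulVec qk1 + C.mulVec vk1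
        = Fk1 + (η / ν) • (K.mulVec zk1 + C.mulVec xk1 - yk1))
    (hw : M.mulVec w = G.mulVec P)
    (hv : vk1 = vk + (h * (1 - γ)) • ak + (h * γ) • ak1 + w)
    (hq : qk1 = qk + h • vk + (h ^ 2 * (1/2 - β)) • ak + (h ^ 2 * β) • ak1
        + (h / 2) • w)
    (hz : ν • (zk1 - zk) + (1/2 : ℝ) • (zk1 + zk) = ν • (qk1 - qk)) :
    (1/2 * (vk1 ⬝ᵥ M.mulVec vk1) + 1/2 * (qk1 ⬝ᵥ K.mulVec qk1)
        + h ^ 2 / 4 * (2 * β - γ) * (ak1 ⬝ᵥ M.mulVec ak1)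
        + η / (2 * ν ^ 2) * (ν - (γ - 1/2)) * (zk1 ⬝ᵥ K.mulVec zk1))
      - (1/2 * (vk ⬝ᵥ M.mulVec vk) + 1/2 * (qk ⬝ᵥ K.mulVec qk)
        + h ^ 2 / 4 * (2 * β - γ) * (ak ⬝ᵥ M.mulVec ak)
        + η / (2 * ν ^ 2) * (ν - (γ - 1/2)) * (zk ⬝ᵥ K.mulVec zk))
      - (qk1 - qk) ⬝ᵥ (γ • Fk1 + (1 - γ) • Fk)
      - (-((qk1 - qk) ⬝ᵥ C.mulVec (γ • vk1 + (1 - γ) • vk)))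
      + (η / ν) * ((qk1 - qk) ⬝ᵥ
          ((γ • yk1 + (1 - γ) • yk) - C.mulVec (γ • xk1 + (1 - γ) • xk)))
    = ((1/2 : ℝ) • (Gᵀ.mulVec vk + Gᵀ.mulVec vk1)) ⬝ᵥ P
      + 1/2 * h ^ 2 * (1/2 - γ) * (2 * β - γ) * ((ak1 - ak) ⬝ᵥ M.mulVec (ak1 - ak))
      + (η + 1/2 - γ) * ((qk1 - qk) ⬝ᵥ K.mulVec (qk1 - qk))
      + (η / ν) * (γ - ν - 1/2) * ((zk1 - zk) ⬝ᵥ K.mulVec (zk1 - zk)) := by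
  have sM := symm_dot hM.isHermitian
  have sK := symm_dot hK.isHermitian
  -- contact work
  have hU : ((1/2 : ℝ) • (Gᵀ.mulVec vk + Gᵀ.mulVec vk1)) ⬝ᵥ P
      = 1/2 * ((vk + vk1) ⬝ᵥ M.mulVec w) := by
    rw [hw, ← mulVec_add, smul_dotProduct, mulVec_transpose, ← dotProduct_mulVec, smul_eq_mul]
  -- external forces from the balance
  have hF : Fk = M.mulVec ak + K.mulVec qk + C.mulVec vk
      - (η / ν) • (K.mulVec zk + C.mulVec xk - yk) := by rw [hbalk]; abel
  have hF1 : Fk1 = M.mulVec ak1 + K.mulVec qk1 + C.mulVec vk1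
      - (η / ν) • (K.mulVec zk1 + C.mulVec xk1 - yk1) := by rw [hbalk1]; abel
  -- inertial part
  have eM : 1/2 * (vk1 ⬝ᵥ M.mulVec vk1) - 1/2 * (vk ⬝ᵥ M.mulVec vk)
      + h ^ 2 / 4 * (2 * β - γ) * (ak1 ⬝ᵥ M.mulVec ak1 - ak ⬝ᵥ M.mulVec ak)
      - (γ * ((qk1 - qk) ⬝ᵥ M.mulVec ak1) + (1 - γ) * ((qk1 - qk) ⬝ᵥ M.mulVec ak))
      = 1/2 * ((vk + vk1) ⬝ᵥ M.mulVec w)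
      + 1/2 * h ^ 2 * (1/2 - γ) * (2 * β - γ) * ((ak1 - ak) ⬝ᵥ M.mulVec (ak1 - ak)) := by
    have hd : qk1 - qk = h • vk + (h ^ 2 * (1/2 - β)) • ak + (h ^ 2 * β) • ak1
        + (h / 2) • w := by rw [hq]; abel
    rw [hd, hv]
    simp only [mulVec_add, mulVec_sub, mulVec_smul, dotProduct_add, add_dotProduct,
      dotProduct_sub, sub_dotProduct, smul_dotProduct, dotProduct_smul, smul_eq_mul]
    rw [sM ak vk, sM ak1 vk, sM w vk, sM ak1 ak, sM w ak, sM w ak1]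
    ring
  -- stiffness part
  have eK : 1/2 * (qk1 ⬝ᵥ K.mulVec qk1) - 1/2 * (qk ⬝ᵥ K.mulVec qk)
      - (γ * ((qk1 - qk) ⬝ᵥ K.mulVec qk1) + (1 - γ) * ((qk1 - qk) ⬝ᵥ K.mulVec qk))
      = (1/2 - γ) * ((qk1 - qk) ⬝ᵥ K.mulVec (qk1 - qk)) := by
    simp only [mulVec_sub, dotProduct_sub, sub_dotProduct]
    rw [sK qk1 qk]
    ring
  -- filter part
  have eZ : η / (2 * ν ^ 2) * (ν - (γ - 1/2)) * (zk1 ⬝ᵥ K.mulVec zk1 - zk ⬝ᵥ K.mulVec zk)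
      + (η / ν) * (γ * ((qk1 - qk) ⬝ᵥ K.mulVec zk1) + (1 - γ) * ((qk1 - qk) ⬝ᵥ K.mulVec zk))
      = η * ((qk1 - qk) ⬝ᵥ K.mulVec (qk1 - qk))
      + (η / ν) * (γ - ν - 1/2) * ((zk1 - zk) ⬝ᵥ K.mulVec (zk1 - zk)) := by
    have hd : qk1 - qk = (zk1 - zk) + (1 / (2 * ν)) • (zk1 + zk) := by
      funext i
      have hi := congrFun hz i
      simp only [Pi.add_apply, Pi.sub_apply, Pi.smul_apply, smul_eq_mul] at hi ⊢
      field_simp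
      linarith
    rw [hd]
    simp only [mulVec_add, mulVec_sub, mulVec_smul, dotProduct_add, add_dotProduct,
      dotProduct_sub, sub_dotProduct, smul_dotProduct, dotProduct_smul, smul_eq_mul]
    rw [sK zk1 zk]
    field_simp
    ring
  rw [hU, hF, hF1]
  generalize hdd : qk1 - qk = d at *
  simp only [mulVec_add, mulVec_smul, dotProduct_add,
    dotProduct_sub, dotProduct_smul, smul_eq_mul] at eM eK eZ ⊢
  linear_combination eM + eK + eZ
end

section
/- If local velocities U_k, U_{k+1} ∈ ℝᵐ and an impulse P_{k+1} ∈ ℝᵐ satisfy the discrete contact conditions, then the discrete work of the contact impulses is nonpositive: U_{k+1/2}ᵀ P_{k+1} ≤ 0, where U_{k+1/2} = (1/2)(U_k + U_{k+1}). -/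
open Matrix

/-- Under the discrete contact conditions the discrete work of the contact
impulses is nonpositive: `U_{k+1/2}ᵀ P_{k+1} ≤ 0`. -/
theorem discrete_contact_work_nonpositive
    (m : ℕ) (hm : 1 ≤ m)
    (Uk Uk1 P : Fin m → ℝ)
    (e : Fin m → ℝ) (I₁ : Finset (Fin m))
    (he : ∀ α, 0 ≤ e α ∧ e α ≤ 1)
    (hPout : ∀ α ∉ I₁, P α = 0)
    (hc : ∀ α ∈ I₁, Uk α ≤ 0
        ∧ 0 ≤ Uk1 α + e α * Uk α
        ∧ 0 ≤ P α
        ∧ (Uk1 α + e α * Uk α) * P α = 0) :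
    ((1/2 : ℝ) • (Uk + Uk1)) ⬝ᵥ P ≤ 0 := by
  unfold dotProduct
  apply Finset.sum_nonpos
  intro α _
  simp only [Pi.smul_apply, Pi.add_apply, smul_eq_mul]
  by_cases hα : α ∈ I₁
  · obtain ⟨h1, _, h3, h4⟩ := hc α hα
    have h5 : 0 ≤ (1 - e α) * (-Uk α * P α) :=
      mul_nonneg (sub_nonneg.2 (he α).2) (mul_nonneg (neg_nonneg.2 h1) h3)
    nlinarith
  · simp [hPout α hα]
end

section
/- For any step of the nonsmooth HHT scheme, the variation of the algorithmic energy satisfies H_{k+1} − H_k − W_ext − W_damp = U_{k+1/2}ᵀ P_{k+1} − (1/2)h²(γ − 1/2)(2β − γ)‖a_{k+1}−a_k‖²_M − (γ − 1/2 − α)‖q_{k+1}−q_k‖²_K − 2α(1−γ)‖z_{k+1}−z_k‖²_K. -/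
open Matrix

/-- Variation of the algorithmic energy over one step of the nonsmooth HHT scheme. -/
theorem nonsmooth_HHT_algorithmic_energy
    (n m : ℕ) (hn : 1 ≤ n) (hm : 1 ≤ m)
    (h γ β α : ℝ) (hh : 0 < h)
    (M K C : Matrix (Fin n) (Fin n) ℝ) (G : Matrix (Fin n) (Fin m) ℝ)
    (hM : M.PosDef) (hK : K.PosSemidef)
    (qkm1 qk qk1 vkm1 vk vk1 ak ak1 Fkm1 Fk Fk1 w : Fin n → ℝ)
    (P : Fin m → ℝ)
    (hbalk : M.mulVec ak + (1 - α) • (K.mulVec qk + C.mulVec vk)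
        + α • (K.mulVec qkm1 + C.mulVec vkm1) = (1 - α) • Fk + α • Fkm1)
    (hbalk1 : M.mulVec ak1 + (1 - α) • (K.mulVec qk1 + C.mulVec vk1)
        + α • (K.mulVec qk + C.mulVec vk) = (1 - α) • Fk1 + α • Fk)
    (hw : M.mulVec w = G.mulVec P)
    (hv : vk1 = vk + (h * (1 - γ)) • ak + (h * γ) • ak1 + w)
    (hq : qk1 = qk + h • vk + (h ^ 2 * (1/2 - β)) • ak + (h ^ 2 * β) • ak1
        + (h / 2) • w) :
    (1/2 * (vk1 ⬝ᵥ M.mulVec vk1) + 1/2 * (qk1 ⬝ᵥ K.mulVec qk1)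
        + h ^ 2 / 4 * (2 * β - γ) * (ak1 ⬝ᵥ M.mulVec ak1)
        + 2 * α * (1 - γ) * (((1/2 : ℝ) • (qk1 - qk)) ⬝ᵥ K.mulVec ((1/2 : ℝ) • (qk1 - qk))))
      - (1/2 * (vk ⬝ᵥ M.mulVec vk) + 1/2 * (qk ⬝ᵥ K.mulVec qk)
        + h ^ 2 / 4 * (2 * β - γ) * (ak ⬝ᵥ M.mulVec ak)
        + 2 * α * (1 - γ) * (((1/2 : ℝ) • (qk - qkm1)) ⬝ᵥ K.mulVec ((1/2 : ℝ) • (qk - qkm1))))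
      - (qk1 - qk) ⬝ᵥ ((1 - α) • (γ • Fk1 + (1 - γ) • Fk) + α • (γ • Fk + (1 - γ) • Fkm1))
      - (-((qk1 - qk) ⬝ᵥ C.mulVec ((1 - α) • (γ • vk1 + (1 - γ) • vk)
          + α • (γ • vk + (1 - γ) • vkm1))))
    = ((1/2 : ℝ) • (Gᵀ.mulVec vk + Gᵀ.mulVec vk1)) ⬝ᵥ P
      - 1/2 * h ^ 2 * (γ - 1/2) * (2 * β - γ) * ((ak1 - ak) ⬝ᵥ M.mulVec (ak1 - ak))
      - (γ - 1/2 - α) * ((qk1 - qk) ⬝ᵥ K.mulVec (qk1 - qk))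
      - 2 * α * (1 - γ) * ((((1/2 : ℝ) • (qk1 - qk)) - ((1/2 : ℝ) • (qk - qkm1))) ⬝ᵥ
          K.mulVec (((1/2 : ℝ) • (qk1 - qk)) - ((1/2 : ℝ) • (qk - qkm1)))) := by
  have sM : ∀ x y : Fin n → ℝ, x ⬝ᵥ M.mulVec y = y ⬝ᵥ M.mulVec x := by
    intro x y
    have ht : Mᵀ = M := by simpa using hM.isHermitian.eq
    rw [dotProduct_mulVec, ← mulVec_transpose, ht, dotProduct_comm]
  have sK : ∀ x y : Fin n → ℝ, x ⬝ᵥ K.mulVec y = y ⬝ᵥ K.mulVec x := by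
    intro x y
    have ht : Kᵀ = K := by simpa using hK.isHermitian.eq
    rw [dotProduct_mulVec, ← mulVec_transpose, ht, dotProduct_comm]
  have hP : ∀ x : Fin n → ℝ, Gᵀ.mulVec x ⬝ᵥ P = x ⬝ᵥ M.mulVec w := by
    intro x
    rw [hw, mulVec_transpose, dotProduct_mulVec]
  -- the inertial part of the balance
  have hMpart : 1/2 * (vk1 ⬝ᵥ M.mulVec vk1) - 1/2 * (vk ⬝ᵥ M.mulVec vk)
      + h ^ 2 / 4 * (2 * β - γ) * (ak1 ⬝ᵥ M.mulVec ak1)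
      - h ^ 2 / 4 * (2 * β - γ) * (ak ⬝ᵥ M.mulVec ak)
      - (γ * ((qk1 - qk) ⬝ᵥ M.mulVec ak1) + (1 - γ) * ((qk1 - qk) ⬝ᵥ M.mulVec ak))
      = 1/2 * (vk ⬝ᵥ M.mulVec w + vk1 ⬝ᵥ M.mulVec w)
      - 1/2 * h ^ 2 * (γ - 1/2) * (2 * β - γ) * ((ak1 - ak) ⬝ᵥ M.mulVec (ak1 - ak)) := by
    have hd : qk1 - qk = h • vk + (h ^ 2 * (1/2 - β)) • ak + (h ^ 2 * β) • ak1
        + (h / 2) • w := by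
      rw [hq]; abel
    rw [hd, hv]
    simp only [mulVec_add, mulVec_sub, mulVec_smul, dotProduct_add, dotProduct_sub,
      dotProduct_smul, add_dotProduct, sub_dotProduct, smul_dotProduct, smul_eq_mul]
    rw [sM ak vk, sM ak1 vk, sM w vk, sM ak1 ak, sM w ak, sM w ak1]
    ring
  have e1 := congrArg (fun x => (qk1 - qk) ⬝ᵥ x) hbalk
  have e2 := congrArg (fun x => (qk1 - qk) ⬝ᵥ x) hbalk1
  clear hbalk hbalk1 hv hq
  simp only [smul_dotProduct, add_dotProduct, hP, smul_eq_mul]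
  simp only [mulVec_add, mulVec_sub, mulVec_smul, dotProduct_add, dotProduct_sub,
      dotProduct_smul, add_dotProduct, sub_dotProduct, smul_dotProduct, smul_eq_mul]
    at hMpart e1 e2 ⊢
  rw [sK qk1 qk, sK qk1 qkm1, sK qk qkm1] at *
  linear_combination hMpart + γ * e2 + (1 - γ) * e1
end

section
/- If the parameters satisfy 2β ≥ γ ≥ 1/2 and 0 ≤ α ≤ γ − 1/2 ≤ 1/2, and the local velocities and impulse satisfy the discrete contact conditions, then any step of the nonsmooth HHT scheme dissipates the algorithmic energy in the sense that H_{k+1} − H_k − W_ext − W_damp ≤ 0. -/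
open Matrix

theorem dot_symm_of_hermitian {n : ℕ} (A : Matrix (Fin n) (Fin n) ℝ) (hA : A.IsHermitian)
    (x y : Fin n → ℝ) : x ⬝ᵥ A.mulVec y = y ⬝ᵥ A.mulVec x := by
  have hT : Aᵀ = A := by simpa using hA.eq
  rw [Matrix.dotProduct_mulVec, ← Matrix.mulVec_transpose, hT, dotProduct_comm]

/-- The nonsmooth HHT scheme dissipates the algorithmic energy when
`2β ≥ γ ≥ 1/2` and `0 ≤ α ≤ γ − 1/2 ≤ 1/2`, under the discrete contact
conditions. -/
theorem nonsmooth_HHT_dissipates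
    (n m : ℕ) (hn : 1 ≤ n) (hm : 1 ≤ m)
    (h γ β α : ℝ) (hh : 0 < h)
    (M K C : Matrix (Fin n) (Fin n) ℝ) (G : Matrix (Fin n) (Fin m) ℝ)
    (hM : M.PosDef) (hK : K.PosSemidef)
    (qkm1 qk qk1 vkm1 vk vk1 ak ak1 Fkm1 Fk Fk1 w : Fin n → ℝ)
    (P : Fin m → ℝ)
    (hbalk : M.mulVec ak + (1 - α) • (K.mulVec qk + C.mulVec vk)
        + α • (K.mulVec qkm1 + C.mulVec vkm1) = (1 - α) • Fk + α • Fkm1)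
    (hbalk1 : M.mulVec ak1 + (1 - α) • (K.mulVec qk1 + C.mulVec vk1)
        + α • (K.mulVec qk + C.mulVec vk) = (1 - α) • Fk1 + α • Fk)
    (hw : M.mulVec w = G.mulVec P)
    (hv : vk1 = vk + (h * (1 - γ)) • ak + (h * γ) • ak1 + w)
    (hq : qk1 = qk + h • vk + (h ^ 2 * (1/2 - β)) • ak + (h ^ 2 * β) • ak1
        + (h / 2) • w)
    (e : Fin m → ℝ) (I₁ : Finset (Fin m))
    (he : ∀ i, 0 ≤ e i ∧ e i ≤ 1)
    (hPout : ∀ i ∉ I₁, P i = 0)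
    (hc : ∀ i ∈ I₁, Gᵀ.mulVec vk i ≤ 0
        ∧ 0 ≤ Gᵀ.mulVec vk1 i + e i * Gᵀ.mulVec vk i
        ∧ 0 ≤ P i
        ∧ (Gᵀ.mulVec vk1 i + e i * Gᵀ.mulVec vk i) * P i = 0)
    (hβ : γ ≤ 2 * β) (hγ : 1/2 ≤ γ)
    (hα0 : 0 ≤ α) (hαγ : α ≤ γ - 1/2) (hγ1 : γ - 1/2 ≤ 1/2) :
    (1/2 * (vk1 ⬝ᵥ M.mulVec vk1) + 1/2 * (qk1 ⬝ᵥ K.mulVec qk1)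
        + h ^ 2 / 4 * (2 * β - γ) * (ak1 ⬝ᵥ M.mulVec ak1)
        + 2 * α * (1 - γ) * (((1/2 : ℝ) • (qk1 - qk)) ⬝ᵥ K.mulVec ((1/2 : ℝ) • (qk1 - qk))))
      - (1/2 * (vk ⬝ᵥ M.mulVec vk) + 1/2 * (qk ⬝ᵥ K.mulVec qk)
        + h ^ 2 / 4 * (2 * β - γ) * (ak ⬝ᵥ M.mulVec ak)
        + 2 * α * (1 - γ) * (((1/2 : ℝ) • (qk - qkm1)) ⬝ᵥ K.mulVec ((1/2 : ℝ) • (qk - qkm1))))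
      - (qk1 - qk) ⬝ᵥ ((1 - α) • (γ • Fk1 + (1 - γ) • Fk) + α • (γ • Fk + (1 - γ) • Fkm1))
      - (-((qk1 - qk) ⬝ᵥ C.mulVec ((1 - α) • (γ • vk1 + (1 - γ) • vk)
          + α • (γ • vk + (1 - γ) • vkm1)))) ≤ 0 := by
  have symM : ∀ x y : Fin n → ℝ, x ⬝ᵥ M.mulVec y = y ⬝ᵥ M.mulVec x := fun x y =>
    dot_symm_of_hermitian M hM.isHermitian x y
  have symK : ∀ x y : Fin n → ℝ, x ⬝ᵥ K.mulVec y = y ⬝ᵥ K.mulVec x := fun x y =>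
    dot_symm_of_hermitian K hK.isHermitian x y
  have nnM : ∀ x : Fin n → ℝ, 0 ≤ x ⬝ᵥ M.mulVec x := fun x => by
    simpa using hM.posSemidef.dotProduct_mulVec_nonneg x
  have nnK : ∀ x : Fin n → ℝ, 0 ≤ x ⬝ᵥ K.mulVec x := fun x => by
    simpa using hK.dotProduct_mulVec_nonneg x
  -- contact work
  have hcontact : (vk + vk1) ⬝ᵥ M.mulVec w ≤ 0 := by
    rw [hw, Matrix.dotProduct_mulVec, ← Matrix.mulVec_transpose, Matrix.mulVec_add]
    unfold dotProduct
    apply Finset.sum_nonpos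
    intro i _
    by_cases hi : i ∈ I₁
    · obtain ⟨h1, h2, h3, h4⟩ := hc i hi
      have h5 : 0 ≤ (1 - e i) * (-(Gᵀ.mulVec vk i)) * P i :=
        mul_nonneg (mul_nonneg (by linarith [(he i).2]) (by linarith)) h3
      simp only [Pi.add_apply]
      nlinarith
    · rw [hPout i hi, mul_zero]
  -- balance tested against the displacement increment
  obtain ⟨d, hd⟩ : ∃ d, d = qk1 - qk := ⟨_, rfl⟩
  obtain ⟨d', hd'⟩ : ∃ d', d' = qk - qkm1 := ⟨_, rfl⟩
  have b0 := congrArg (fun x => d ⬝ᵥ x) hbalk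
  have b1 := congrArg (fun x => d ⬝ᵥ x) hbalk1
  have e1 : qk1 = qk + d := by rw [hd]; abel
  have e2 : qkm1 = qk - d' := by rw [hd']; abel
  have hd2 : d = (h / 2) • (vk + vk1) + (h ^ 2 * (β - γ / 2)) • (ak1 - ak) := by
    rw [hd, hq, hv]
    ext i
    simp only [Pi.add_apply, Pi.sub_apply, Pi.smul_apply, smul_eq_mul]
    ring
  have hw2 : w = vk1 - vk - (h * (1 - γ)) • ak - (h * γ) • ak1 := by
    rw [hv]; abel
  have hdM : ∀ x, d ⬝ᵥ M.mulVec x = h / 2 * (vk ⬝ᵥ M.mulVec x + vk1 ⬝ᵥ M.mulVec x)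
      + h ^ 2 * (β - γ / 2) * (ak1 ⬝ᵥ M.mulVec x - ak ⬝ᵥ M.mulVec x) := by
    intro x
    rw [hd2]
    simp only [add_dotProduct, sub_dotProduct, smul_dotProduct, smul_eq_mul]
  have p1 := mul_nonneg (mul_nonneg (mul_nonneg (sq_nonneg h) (sub_nonneg.2 hβ))
    (sub_nonneg.2 hγ)) (nnM (ak1 - ak))
  have p2 := mul_nonneg (sub_nonneg.2 hαγ) (nnK d)
  have p3 := mul_nonneg (mul_nonneg hα0 (by linarith : 0 ≤ 1 - γ)) (nnK (d - d'))
  rw [hw2] at hcontact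
  rw [← hd, ← hd']
  clear hd hd' hd2 hw2 hq hv hbalk hbalk1 hw hc
  subst e1 e2
  simp only [Matrix.mulVec_add, Matrix.mulVec_sub, Matrix.mulVec_smul, dotProduct_add,
    dotProduct_sub, dotProduct_smul, add_dotProduct, sub_dotProduct, smul_dotProduct,
    smul_eq_mul, hdM] at *
  rw [symM vk1 vk, symM ak1 ak] at *
  rw [symK d' d] at *
  rw [symK d qk] at *
  linear_combination (1 / 2) * hcontact + (1 / 2) * p1 + p2 + (1 / 2) * p3
    + γ * b1 + (1 - γ) * b0
end

section
/- For any step of the nonsmooth Newmark scheme, the variation of the algorithmic energy satisfies H(q_{k+1},v_{k+1},a_{k+1}) − H(q_k,v_k,a_k) − W_ext − W_damp = (1/2 − γ)·( ‖q_{k+1}−q_k‖²_K + (h²/2)(2β − γ)‖a_{k+1}−a_k‖²_M ) + U_{k+1/2}ᵀ P_{k+1}. -/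
open Matrix

/-- Variation of the algorithmic energy over one step of the nonsmooth Newmark scheme. -/
theorem nonsmooth_newmark_algorithmic_energy
    (n m : ℕ) (hn : 1 ≤ n) (hm : 1 ≤ m)
    (h γ β : ℝ) (hh : 0 < h)
    (M K C : Matrix (Fin n) (Fin n) ℝ) (G : Matrix (Fin n) (Fin m) ℝ)
    (hM : M.PosDef) (hK : K.PosSemidef)
    (qk qk1 vk vk1 ak ak1 w Fk Fk1 : Fin n → ℝ) (P : Fin m → ℝ)
    (hbalk : M.mulVec ak + K.mulVec qk + C.mulVec vk = Fk)
    (hbalk1 : M.mulVec ak1 + K.mulVec qk1 + C.mulVec vk1 = Fk1)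
    (hw : M.mulVec w = G.mulVec P)
    (hv : vk1 = vk + (h * (1 - γ)) • ak + (h * γ) • ak1 + w)
    (hq : qk1 = qk + h • vk + (h ^ 2 * (1/2 - β)) • ak + (h ^ 2 * β) • ak1
        + (h / 2) • w) :
    (1/2 * (vk1 ⬝ᵥ M.mulVec vk1) + 1/2 * (qk1 ⬝ᵥ K.mulVec qk1)
        + h ^ 2 / 4 * (2 * β - γ) * (ak1 ⬝ᵥ M.mulVec ak1))
      - (1/2 * (vk ⬝ᵥ M.mulVec vk) + 1/2 * (qk ⬝ᵥ K.mulVec qk)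
        + h ^ 2 / 4 * (2 * β - γ) * (ak ⬝ᵥ M.mulVec ak))
      - (qk1 - qk) ⬝ᵥ (γ • Fk1 + (1 - γ) • Fk)
      - (-((qk1 - qk) ⬝ᵥ C.mulVec (γ • vk1 + (1 - γ) • vk)))
    = (1/2 - γ) * ((qk1 - qk) ⬝ᵥ K.mulVec (qk1 - qk)
        + h ^ 2 / 2 * (2 * β - γ) * ((ak1 - ak) ⬝ᵥ M.mulVec (ak1 - ak)))
      + ((1/2 : ℝ) • (Gᵀ.mulVec vk + Gᵀ.mulVec vk1)) ⬝ᵥ P := by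
  have symm : ∀ (A : Matrix (Fin n) (Fin n) ℝ), A.IsHermitian →
      ∀ x y : Fin n → ℝ, x ⬝ᵥ A.mulVec y = y ⬝ᵥ A.mulVec x := by
    intro A hA x y
    have hT : Aᵀ = A := by simpa [Matrix.IsHermitian] using hA
    rw [dotProduct_mulVec, dotProduct_comm, ← mulVec_transpose, hT]
  have sM := symm M hM.isHermitian
  have sK := symm K hK.isHermitian
  have hU : ∀ x : Fin n → ℝ, Gᵀ.mulVec x ⬝ᵥ P = x ⬝ᵥ M.mulVec w := by
    intro x
    rw [hw, dotProduct_mulVec, mulVec_transpose]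
  obtain ⟨d, hd⟩ : ∃ d, d = qk1 - qk := ⟨_, rfl⟩
  have hd' : d = h • vk + (h ^ 2 * (1/2 - β)) • ak + (h ^ 2 * β) • ak1 + (h / 2) • w := by
    rw [hd, hq]; abel
  have hq1 : qk1 = qk + d := by rw [hd]; abel
  have hdM : ∀ x : Fin n → ℝ, d ⬝ᵥ M.mulVec x = h * (vk ⬝ᵥ M.mulVec x)
      + h ^ 2 * (1/2 - β) * (ak ⬝ᵥ M.mulVec x) + h ^ 2 * β * (ak1 ⬝ᵥ M.mulVec x)
      + h / 2 * (w ⬝ᵥ M.mulVec x) := by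
    intro x
    rw [hd']
    simp only [add_dotProduct, smul_dotProduct, smul_eq_mul]
  have e1 : (qk1 - qk) ⬝ᵥ (γ • Fk1 + (1 - γ) • Fk)
      = γ * (d ⬝ᵥ M.mulVec ak1) + (1 - γ) * (d ⬝ᵥ M.mulVec ak)
        + d ⬝ᵥ K.mulVec qk + γ * (d ⬝ᵥ K.mulVec d)
        + d ⬝ᵥ C.mulVec (γ • vk1 + (1 - γ) • vk) := by
    rw [← hd, ← hbalk, ← hbalk1, hq1]
    simp only [mulVec_add, mulVec_smul, dotProduct_add, dotProduct_smul, smul_eq_mul]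
    ring
  rw [e1, ← hd, hdM, hdM, hq1, hv]
  simp only [mulVec_add, mulVec_sub, mulVec_smul, dotProduct_add, dotProduct_smul, dotProduct_sub,
    add_dotProduct, sub_dotProduct, smul_dotProduct, smul_eq_mul, hU]
  rw [sK qk d, sM ak1 ak, sM ak vk, sM ak1 vk, sM w vk, sM w ak, sM w ak1]
  ring
end

section
/- If 2β ≥ γ ≥ 1/2 and the local velocities and impulse satisfy the discrete contact conditions, then any step of the nonsmooth Newmark scheme dissipates the algorithmic energy in the sense that H(q_{k+1},v_{k+1},a_{k+1}) − H(q_k,v_k,a_k) − W_ext − W_damp ≤ 0. -/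
open Matrix

/-- The nonsmooth Newmark scheme dissipates the algorithmic energy when
`2β ≥ γ ≥ 1/2`, under the discrete contact conditions. -/
theorem nonsmooth_newmark_dissipates
    (n m : ℕ) (hn : 1 ≤ n) (hm : 1 ≤ m)
    (h γ β : ℝ) (hh : 0 < h)
    (M K C : Matrix (Fin n) (Fin n) ℝ) (G : Matrix (Fin n) (Fin m) ℝ)
    (hM : M.PosDef) (hK : K.PosSemidef)
    (qk qk1 vk vk1 ak ak1 w Fk Fk1 : Fin n → ℝ) (P : Fin m → ℝ)
    (hbalk : M.mulVec ak + K.mulVec qk + C.mulVec vk = Fk)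
    (hbalk1 : M.mulVec ak1 + K.mulVec qk1 + C.mulVec vk1 = Fk1)
    (hw : M.mulVec w = G.mulVec P)
    (hv : vk1 = vk + (h * (1 - γ)) • ak + (h * γ) • ak1 + w)
    (hq : qk1 = qk + h • vk + (h ^ 2 * (1/2 - β)) • ak + (h ^ 2 * β) • ak1
        + (h / 2) • w)
    (e : Fin m → ℝ) (I₁ : Finset (Fin m))
    (he : ∀ α, 0 ≤ e α ∧ e α ≤ 1)
    (hPout : ∀ α ∉ I₁, P α = 0)
    (hc : ∀ α ∈ I₁, Gᵀ.mulVec vk α ≤ 0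
        ∧ 0 ≤ Gᵀ.mulVec vk1 α + e α * Gᵀ.mulVec vk α
        ∧ 0 ≤ P α
        ∧ (Gᵀ.mulVec vk1 α + e α * Gᵀ.mulVec vk α) * P α = 0)
    (hβ : γ ≤ 2 * β) (hγ : 1/2 ≤ γ) :
    (1/2 * (vk1 ⬝ᵥ M.mulVec vk1) + 1/2 * (qk1 ⬝ᵥ K.mulVec qk1)
        + h ^ 2 / 4 * (2 * β - γ) * (ak1 ⬝ᵥ M.mulVec ak1))
      - (1/2 * (vk ⬝ᵥ M.mulVec vk) + 1/2 * (qk ⬝ᵥ K.mulVec qk)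
        + h ^ 2 / 4 * (2 * β - γ) * (ak ⬝ᵥ M.mulVec ak))
      - (qk1 - qk) ⬝ᵥ (γ • Fk1 + (1 - γ) • Fk)
      - (-((qk1 - qk) ⬝ᵥ C.mulVec (γ • vk1 + (1 - γ) • vk))) ≤ 0 := by
  have hMs : ∀ x y : Fin n → ℝ, x ⬝ᵥ M.mulVec y = y ⬝ᵥ M.mulVec x := by
    intro x y
    have hT : Mᵀ = M := by simpa using hM.isHermitian.eq
    rw [dotProduct_mulVec, dotProduct_comm, ← mulVec_transpose, hT]
  have hKs : ∀ x y : Fin n → ℝ, x ⬝ᵥ K.mulVec y = y ⬝ᵥ K.mulVec x := by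
    intro x y
    have hT : Kᵀ = K := by simpa using hK.isHermitian.eq
    rw [dotProduct_mulVec, dotProduct_comm, ← mulVec_transpose, hT]
  have hMp : ∀ x : Fin n → ℝ, 0 ≤ x ⬝ᵥ M.mulVec x := fun x => by
    simpa using hM.posSemidef.dotProduct_mulVec_nonneg x
  have hKp : ∀ x : Fin n → ℝ, 0 ≤ x ⬝ᵥ K.mulVec x := fun x => by
    simpa using hK.dotProduct_mulVec_nonneg x
  -- the contact work is nonpositive
  have hcontact : vk ⬝ᵥ M.mulVec w + vk1 ⬝ᵥ M.mulVec w ≤ 0 := by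
    have hG : ∀ x : Fin n → ℝ, x ⬝ᵥ M.mulVec w = Gᵀ.mulVec x ⬝ᵥ P := fun x => by
      rw [hw, dotProduct_mulVec, mulVec_transpose]
    rw [hG, hG, ← add_dotProduct]
    refine Finset.sum_nonpos fun α _ => ?_
    by_cases hα : α ∈ I₁
    · obtain ⟨h1, _, h3, h4⟩ := hc α hα
      have h5 : 0 ≤ (1 - e α) * (-(Gᵀ.mulVec vk α)) * P α :=
        mul_nonneg (mul_nonneg (by linarith [(he α).2]) (by linarith)) h3
      simp only [Pi.add_apply]
      nlinarith
    · simp [hPout α hα]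
  -- the elastic part
  have hel : 1/2 * (qk1 ⬝ᵥ K.mulVec qk1) - 1/2 * (qk ⬝ᵥ K.mulVec qk)
      - (γ * ((qk1 - qk) ⬝ᵥ K.mulVec qk1) + (1 - γ) * ((qk1 - qk) ⬝ᵥ K.mulVec qk))
      = -((γ - 1/2) * ((qk1 - qk) ⬝ᵥ K.mulVec (qk1 - qk))) := by
    simp only [mulVec_sub, sub_dotProduct, dotProduct_sub]
    rw [hKs qk1 qk]
    ring
  -- the inertial part
  have hin : 1/2 * (vk1 ⬝ᵥ M.mulVec vk1) - 1/2 * (vk ⬝ᵥ M.mulVec vk)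
      + h ^ 2 / 4 * (2 * β - γ) * (ak1 ⬝ᵥ M.mulVec ak1)
      - h ^ 2 / 4 * (2 * β - γ) * (ak ⬝ᵥ M.mulVec ak)
      - (γ * ((qk1 - qk) ⬝ᵥ M.mulVec ak1) + (1 - γ) * ((qk1 - qk) ⬝ᵥ M.mulVec ak))
      = 1/2 * (vk ⬝ᵥ M.mulVec w + vk1 ⬝ᵥ M.mulVec w)
        - h ^ 2 / 2 * ((2 * β - γ) * (γ - 1/2)) * ((ak1 - ak) ⬝ᵥ M.mulVec (ak1 - ak)) := by
    rw [hq, hv]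
    simp only [mulVec_sub, mulVec_add, mulVec_smul, sub_dotProduct, dotProduct_sub,
      add_dotProduct, dotProduct_add, smul_dotProduct, dotProduct_smul, smul_eq_mul]
    rw [hMs ak vk, hMs ak1 vk, hMs w vk, hMs ak1 ak, hMs w ak, hMs w ak1]
    ring
  have hF : (qk1 - qk) ⬝ᵥ (γ • Fk1 + (1 - γ) • Fk)
      - (qk1 - qk) ⬝ᵥ C.mulVec (γ • vk1 + (1 - γ) • vk)
      = (γ * ((qk1 - qk) ⬝ᵥ M.mulVec ak1) + (1 - γ) * ((qk1 - qk) ⬝ᵥ M.mulVec ak))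
      + (γ * ((qk1 - qk) ⬝ᵥ K.mulVec qk1) + (1 - γ) * ((qk1 - qk) ⬝ᵥ K.mulVec qk)) := by
    rw [← hbalk, ← hbalk1]
    generalize qk1 - qk = d
    simp only [mulVec_add, mulVec_smul, dotProduct_add, dotProduct_smul, smul_eq_mul]
    ring
  have hd1 : 0 ≤ (γ - 1/2) * ((qk1 - qk) ⬝ᵥ K.mulVec (qk1 - qk)) :=
    mul_nonneg (by linarith) (hKp _)
  have hd2 : 0 ≤ h ^ 2 / 2 * ((2 * β - γ) * (γ - 1/2))
      * ((ak1 - ak) ⬝ᵥ M.mulVec (ak1 - ak)) :=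
    mul_nonneg (mul_nonneg (by positivity)
      (mul_nonneg (by linarith) (by linarith))) (hMp _)
  linarith
end

section
/- For any step of the nonsmooth Newmark scheme with γ = 1/2, the algorithmic energy changes only by the work of the external forces, the damping forces and the contact impulses: H(q_{k+1},v_{k+1},a_{k+1}) − H(q_k,v_k,a_k) − W_ext − W_damp = U_{k+1/2}ᵀ P_{k+1}. -/
open Matrix

/-- For `γ = 1/2`, the algorithmic energy of the nonsmooth Newmark scheme changes
only by the works of the external forces, damping forces and contact impulses. -/
theorem nonsmooth_newmark_gamma_half
    (n m : ℕ) (hn : 1 ≤ n) (hm : 1 ≤ m)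
    (h β : ℝ) (hh : 0 < h)
    (M K C : Matrix (Fin n) (Fin n) ℝ) (G : Matrix (Fin n) (Fin m) ℝ)
    (hM : M.PosDef) (hK : K.PosSemidef)
    (qk qk1 vk vk1 ak ak1 w Fk Fk1 : Fin n → ℝ) (P : Fin m → ℝ)
    (hbalk : M.mulVec ak + K.mulVec qk + C.mulVec vk = Fk)
    (hbalk1 : M.mulVec ak1 + K.mulVec qk1 + C.mulVec vk1 = Fk1)
    (hw : M.mulVec w = G.mulVec P)
    (hv : vk1 = vk + (h * (1 - (1/2 : ℝ))) • ak + (h * (1/2 : ℝ)) • ak1 + w)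
    (hq : qk1 = qk + h • vk + (h ^ 2 * (1/2 - β)) • ak + (h ^ 2 * β) • ak1
        + (h / 2) • w) :
    (1/2 * (vk1 ⬝ᵥ M.mulVec vk1) + 1/2 * (qk1 ⬝ᵥ K.mulVec qk1)
        + h ^ 2 / 4 * (2 * β - 1/2) * (ak1 ⬝ᵥ M.mulVec ak1))
      - (1/2 * (vk ⬝ᵥ M.mulVec vk) + 1/2 * (qk ⬝ᵥ K.mulVec qk)
        + h ^ 2 / 4 * (2 * β - 1/2) * (ak ⬝ᵥ M.mulVec ak))
      - (qk1 - qk) ⬝ᵥ ((1/2 : ℝ) • Fk1 + (1/2 : ℝ) • Fk)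
      - (-((qk1 - qk) ⬝ᵥ C.mulVec ((1/2 : ℝ) • vk1 + (1/2 : ℝ) • vk)))
    = ((1/2 : ℝ) • (Gᵀ.mulVec vk + Gᵀ.mulVec vk1)) ⬝ᵥ P := by
  have symm_of : ∀ A : Matrix (Fin n) (Fin n) ℝ, Aᵀ = A → ∀ x y : Fin n → ℝ,
      x ⬝ᵥ A.mulVec y = y ⬝ᵥ A.mulVec x := by
    intro A hA x y
    rw [Matrix.dotProduct_mulVec, ← Matrix.mulVec_transpose, hA, dotProduct_comm]
  have sM := symm_of M (by simpa using hM.isHermitian.eq)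
  have sK := symm_of K (by simpa using hK.isHermitian.eq)
  have hG : ∀ x : Fin n → ℝ, Gᵀ.mulVec x ⬝ᵥ P = x ⬝ᵥ M.mulVec w := by
    intro x
    rw [hw, Matrix.dotProduct_mulVec, Matrix.mulVec_transpose]
  have hqM : ∀ x : Fin n → ℝ, qk1 ⬝ᵥ x = qk ⬝ᵥ x + h * (vk ⬝ᵥ x)
      + (h ^ 2 * (1/2 - β)) * (ak ⬝ᵥ x) + (h ^ 2 * β) * (ak1 ⬝ᵥ x) + (h / 2) * (w ⬝ᵥ x) := by
    intro x
    rw [hq]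
    simp only [add_dotProduct, smul_dotProduct, smul_eq_mul]
  rw [← hbalk, ← hbalk1]
  simp only [smul_dotProduct, add_dotProduct, sub_dotProduct, dotProduct_add, dotProduct_smul,
    mulVec_add, mulVec_smul, smul_eq_mul, hG]
  rw [hqM (M.mulVec ak), hqM (M.mulVec ak1), sK qk qk1, hv]
  simp only [smul_dotProduct, add_dotProduct, dotProduct_add, dotProduct_smul,
    mulVec_add, mulVec_smul, smul_eq_mul]
  rw [sM ak vk, sM ak1 vk, sM w vk, sM ak1 ak, sM w ak, sM w ak1]
  ring
end

section
/- For any step of the nonsmooth Newmark scheme with γ = 2β, one has E(q_{k+1},v_{k+1}) − E(q_k,v_k) − W_ext − W_damp = (1/2 − γ)‖q_{k+1}−q_k‖²_K + U_{k+1/2}ᵀ P_{k+1}; consequently, if moreover γ ≥ 1/2 and the local velocities and impulse satisfy the discrete contact conditions, the scheme always dissipates the mechanical energy: E(q_{k+1},v_{k+1}) − E(q_k,v_k) ≤ W_ext + W_damp. -/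
open Matrix

/-- For `γ = 2β`, the nonsmooth Newmark scheme satisfies
`ΔE − W_ext − W_damp = (1/2 − γ)‖Δq‖²_K + U_{k+1/2}ᵀP_{k+1}`; if moreover
`γ ≥ 1/2` and the discrete contact conditions hold, it dissipates the
mechanical energy. -/
theorem nonsmooth_newmark_gamma_eq_two_beta
    (n m : ℕ) (hn : 1 ≤ n) (hm : 1 ≤ m)
    (h γ β : ℝ) (hh : 0 < h) (hγβ : γ = 2 * β)
    (M K C : Matrix (Fin n) (Fin n) ℝ) (G : Matrix (Fin n) (Fin m) ℝ)
    (hM : M.PosDef) (hK : K.PosSemidef)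
    (qk qk1 vk vk1 ak ak1 w Fk Fk1 : Fin n → ℝ) (P : Fin m → ℝ)
    (hbalk : M.mulVec ak + K.mulVec qk + C.mulVec vk = Fk)
    (hbalk1 : M.mulVec ak1 + K.mulVec qk1 + C.mulVec vk1 = Fk1)
    (hw : M.mulVec w = G.mulVec P)
    (hv : vk1 = vk + (h * (1 - γ)) • ak + (h * γ) • ak1 + w)
    (hq : qk1 = qk + h • vk + (h ^ 2 * (1/2 - β)) • ak + (h ^ 2 * β) • ak1
        + (h / 2) • w) :
    ((1/2 * (vk1 ⬝ᵥ M.mulVec vk1) + 1/2 * (qk1 ⬝ᵥ K.mulVec qk1))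
      - (1/2 * (vk ⬝ᵥ M.mulVec vk) + 1/2 * (qk ⬝ᵥ K.mulVec qk))
      - (qk1 - qk) ⬝ᵥ (γ • Fk1 + (1 - γ) • Fk)
      - (-((qk1 - qk) ⬝ᵥ C.mulVec (γ • vk1 + (1 - γ) • vk)))
    = (1/2 - γ) * ((qk1 - qk) ⬝ᵥ K.mulVec (qk1 - qk))
      + ((1/2 : ℝ) • (Gᵀ.mulVec vk + Gᵀ.mulVec vk1)) ⬝ᵥ P)
    ∧ (1/2 ≤ γ →
      ∀ (e : Fin m → ℝ) (I₁ : Finset (Fin m)),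
        (∀ α, 0 ≤ e α ∧ e α ≤ 1) →
        (∀ α ∉ I₁, P α = 0) →
        (∀ α ∈ I₁, Gᵀ.mulVec vk α ≤ 0
          ∧ 0 ≤ Gᵀ.mulVec vk1 α + e α * Gᵀ.mulVec vk α
          ∧ 0 ≤ P α
          ∧ (Gᵀ.mulVec vk1 α + e α * Gᵀ.mulVec vk α) * P α = 0) →
        (1/2 * (vk1 ⬝ᵥ M.mulVec vk1) + 1/2 * (qk1 ⬝ᵥ K.mulVec qk1))
          - (1/2 * (vk ⬝ᵥ M.mulVec vk) + 1/2 * (qk ⬝ᵥ K.mulVec qk))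
        ≤ (qk1 - qk) ⬝ᵥ (γ • Fk1 + (1 - γ) • Fk)
          + (-((qk1 - qk) ⬝ᵥ C.mulVec (γ • vk1 + (1 - γ) • vk)))) := by
  have sM : ∀ x y : Fin n → ℝ, x ⬝ᵥ M.mulVec y = y ⬝ᵥ M.mulVec x := by
    intro x y
    have hT : Mᵀ = M := by simpa using hM.isHermitian.eq
    rw [dotProduct_mulVec, ← mulVec_transpose, hT, dotProduct_comm]
  have sK : ∀ x y : Fin n → ℝ, x ⬝ᵥ K.mulVec y = y ⬝ᵥ K.mulVec x := by
    intro x y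
    have hT : Kᵀ = K := by simpa using hK.isHermitian.eq
    rw [dotProduct_mulVec, ← mulVec_transpose, hT, dotProduct_comm]
  have hG : ∀ x : Fin n → ℝ, Gᵀ.mulVec x ⬝ᵥ P = x ⬝ᵥ M.mulVec w := by
    intro x
    rw [hw, dotProduct_mulVec, mulVec_transpose]
  have hd : qk1 - qk = (h / 2) • (vk + vk1) := by
    rw [hq, hv, hγβ]
    ext i
    simp
    ring
  have hdv : vk1 - vk = (h * (1 - γ)) • ak + (h * γ) • ak1 + w := by
    rw [hv]; abel
  have hKE : vk1 ⬝ᵥ M.mulVec vk1 - vk ⬝ᵥ M.mulVec vk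
      = (vk + vk1) ⬝ᵥ M.mulVec (vk1 - vk) := by
    have := sM vk vk1
    simp only [mulVec_sub, dotProduct_sub, add_dotProduct]
    linarith
  have hPE : qk1 ⬝ᵥ K.mulVec qk1 - qk ⬝ᵥ K.mulVec qk
      = (qk1 - qk) ⬝ᵥ K.mulVec qk + (qk1 - qk) ⬝ᵥ K.mulVec qk1 := by
    have := sK qk qk1
    simp only [sub_dotProduct]
    linarith
  have hmain : ((1/2 * (vk1 ⬝ᵥ M.mulVec vk1) + 1/2 * (qk1 ⬝ᵥ K.mulVec qk1))
      - (1/2 * (vk ⬝ᵥ M.mulVec vk) + 1/2 * (qk ⬝ᵥ K.mulVec qk))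
      - (qk1 - qk) ⬝ᵥ (γ • Fk1 + (1 - γ) • Fk)
      - (-((qk1 - qk) ⬝ᵥ C.mulVec (γ • vk1 + (1 - γ) • vk)))
    = (1/2 - γ) * ((qk1 - qk) ⬝ᵥ K.mulVec (qk1 - qk))
      + ((1/2 : ℝ) • (Gᵀ.mulVec vk + Gᵀ.mulVec vk1)) ⬝ᵥ P) := by
    rw [hdv] at hKE
    have e1 : ∀ x, (qk1 - qk) ⬝ᵥ M.mulVec x = (h / 2) * ((vk + vk1) ⬝ᵥ M.mulVec x) := by
      intro x
      rw [hd, smul_dotProduct, smul_eq_mul]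
    have e2 := e1 ak
    have e3 := e1 ak1
    rw [← mulVec_add, smul_dotProduct, hG, ← hbalk, ← hbalk1, mulVec_sub K qk1 qk]
    generalize qk1 - qk = d at *
    generalize vk + vk1 = s at *
    simp only [mulVec_add, mulVec_smul, dotProduct_add, dotProduct_sub, dotProduct_smul,
      smul_eq_mul] at *
    linear_combination (1/2) * hKE + (1/2) * hPE - (1 - γ) * e2 - γ * e3
  refine ⟨hmain, ?_⟩
  intro hγ e I₁ he hP hc
  have hKd : 0 ≤ (qk1 - qk) ⬝ᵥ K.mulVec (qk1 - qk) := by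
    simpa using hK.dotProduct_mulVec_nonneg (qk1 - qk)
  have hU : ((1/2 : ℝ) • (Gᵀ.mulVec vk + Gᵀ.mulVec vk1)) ⬝ᵥ P ≤ 0 := by
    apply Finset.sum_nonpos
    intro α _
    simp only [Pi.smul_apply, Pi.add_apply, smul_eq_mul]
    by_cases hα : α ∈ I₁
    · obtain ⟨h1, _, h3, h4⟩ := hc α hα
      have h5 := mul_nonneg (mul_nonneg (sub_nonneg.2 (he α).2) (neg_nonneg.2 h1)) h3
      linarith
    · rw [hP α hα, mul_zero]
  have := mul_nonneg (sub_nonneg.2 hγ) hKd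
  linarith
end

section
/- For any step of the nonsmooth Newmark scheme with γ = 2β = 1/2, the total mechanical energy changes only by the work of the external forces, the damping forces and the contact impulses: E(q_{k+1},v_{k+1}) − E(q_k,v_k) − W_ext − W_damp = U_{k+1/2}ᵀ P_{k+1}. -/
open Matrix

/-- For `γ = 2β = 1/2`, the total mechanical energy of the nonsmooth Newmark
scheme changes only by the works of the external forces, damping forces and
contact impulses. -/
theorem nonsmooth_newmark_energy_balance_midpoint
    (n m : ℕ) (hn : 1 ≤ n) (hm : 1 ≤ m)
    (h : ℝ) (hh : 0 < h)
    (M K C : Matrix (Fin n) (Fin n) ℝ) (G : Matrix (Fin n) (Fin m) ℝ)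
    (hM : M.PosDef) (hK : K.PosSemidef)
    (qk qk1 vk vk1 ak ak1 w Fk Fk1 : Fin n → ℝ) (P : Fin m → ℝ)
    (hbalk : M.mulVec ak + K.mulVec qk + C.mulVec vk = Fk)
    (hbalk1 : M.mulVec ak1 + K.mulVec qk1 + C.mulVec vk1 = Fk1)
    (hw : M.mulVec w = G.mulVec P)
    (hv : vk1 = vk + (h * (1 - (1/2 : ℝ))) • ak + (h * (1/2 : ℝ)) • ak1 + w)
    (hq : qk1 = qk + h • vk + (h ^ 2 * (1/2 - (1/4 : ℝ))) • ak
        + (h ^ 2 * (1/4 : ℝ)) • ak1 + (h / 2) • w) :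
    (1/2 * (vk1 ⬝ᵥ M.mulVec vk1) + 1/2 * (qk1 ⬝ᵥ K.mulVec qk1))
      - (1/2 * (vk ⬝ᵥ M.mulVec vk) + 1/2 * (qk ⬝ᵥ K.mulVec qk))
      - (qk1 - qk) ⬝ᵥ ((1/2 : ℝ) • Fk1 + (1/2 : ℝ) • Fk)
      - (-((qk1 - qk) ⬝ᵥ C.mulVec ((1/2 : ℝ) • vk1 + (1/2 : ℝ) • vk)))
    = ((1/2 : ℝ) • (Gᵀ.mulVec vk + Gᵀ.mulVec vk1)) ⬝ᵥ P := by
  have symm : ∀ A : Matrix (Fin n) (Fin n) ℝ, Aᵀ = A → ∀ x y : Fin n → ℝ,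
      x ⬝ᵥ A.mulVec y = y ⬝ᵥ A.mulVec x := by
    intro A hA x y
    rw [Matrix.dotProduct_mulVec, ← Matrix.mulVec_transpose, hA, dotProduct_comm]
  have hMs : Mᵀ = M := by simpa [Matrix.IsHermitian] using hM.isHermitian
  have hKs : Kᵀ = K := by simpa [Matrix.IsHermitian] using hK.isHermitian
  have hG : ∀ x : Fin n → ℝ, Gᵀ.mulVec x ⬝ᵥ P = x ⬝ᵥ M.mulVec w := by
    intro x
    rw [hw, Matrix.dotProduct_mulVec, Matrix.mulVec_transpose]
  have hd : qk1 - qk = (h / 2) • (vk + vk1) := by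
    rw [hq, hv]
    ext i
    simp
    ring
  have hw' : w = vk1 - vk - (h / 2) • ak - (h / 2) • ak1 := by
    rw [hv]
    ext i
    simp
    ring
  have hKK : qk1 ⬝ᵥ K.mulVec qk1 - qk ⬝ᵥ K.mulVec qk
      = (qk1 - qk) ⬝ᵥ (K.mulVec qk1 + K.mulVec qk) := by
    simp only [sub_dotProduct, dotProduct_add]
    rw [symm K hKs qk qk1]
    ring
  have e : (qk1 - qk) ⬝ᵥ ((1/2 : ℝ) • Fk1 + (1/2 : ℝ) • Fk)
      = 1/2 * ((qk1 - qk) ⬝ᵥ (K.mulVec qk1 + K.mulVec qk))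
        + (qk1 - qk) ⬝ᵥ C.mulVec ((1/2 : ℝ) • vk1 + (1/2 : ℝ) • vk)
        + 1/2 * ((qk1 - qk) ⬝ᵥ (M.mulVec ak1 + M.mulVec ak)) := by
    rw [← hbalk, ← hbalk1]
    simp only [dotProduct_add, dotProduct_smul, Matrix.mulVec_add, Matrix.mulVec_smul, smul_eq_mul]
    ring
  rw [e, ← hKK, hd]
  simp only [smul_dotProduct, add_dotProduct, hG]
  rw [hw']
  simp only [dotProduct_add, dotProduct_sub, dotProduct_smul,
    Matrix.mulVec_sub, Matrix.mulVec_smul, smul_eq_mul]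
  rw [symm M hMs vk1 vk]
  ring
end

section
/- (Thomson–Tait formula for an impact.) The work done by the contact impulse during an impact, W_impact = (1/2)(v⁺ + v⁻)ᵀ G P, satisfies W_impact = (1/2)(U⁺ + U⁻)ᵀ P = (1/2) Σ_α (1 − e^α) U⁻^α P^α ≤ 0, where U^± = Gᵀ v^±. -/
open Matrix BigOperators

/-- Thomson–Tait formula: the work done by the contact impulse during an impact
satisfying Newton's impact law is nonpositive. -/
theorem thomson_tait_impact_work
    (n m : ℕ) (hn : 1 ≤ n) (hm : 1 ≤ m)
    (G : Matrix (Fin n) (Fin m) ℝ)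
    (vm vp : Fin n → ℝ) (P : Fin m → ℝ) (e : Fin m → ℝ)
    (hP : ∀ α, 0 ≤ P α)
    (hnewton : ∀ α, 0 < P α →
      0 ≤ e α ∧ e α ≤ 1
        ∧ Gᵀ.mulVec vp α = -(e α) * Gᵀ.mulVec vm α
        ∧ Gᵀ.mulVec vm α ≤ 0) :
    (1/2 : ℝ) * ((vp + vm) ⬝ᵥ G.mulVec P)
      = (1/2 : ℝ) * ((Gᵀ.mulVec vp + Gᵀ.mulVec vm) ⬝ᵥ P)
    ∧ (1/2 : ℝ) * ((vp + vm) ⬝ᵥ G.mulVec P)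
      = (1/2 : ℝ) * ∑ α, (1 - e α) * Gᵀ.mulVec vm α * P α
    ∧ (1/2 : ℝ) * ((vp + vm) ⬝ᵥ G.mulVec P) ≤ 0 := by
  have h1 : (vp + vm) ⬝ᵥ G.mulVec P = (Gᵀ.mulVec vp + Gᵀ.mulVec vm) ⬝ᵥ P := by
    rw [Matrix.dotProduct_mulVec, ← Matrix.mulVec_transpose, Matrix.mulVec_add]
  have h2 : (Gᵀ.mulVec vp + Gᵀ.mulVec vm) ⬝ᵥ P
      = ∑ α, (1 - e α) * Gᵀ.mulVec vm α * P α := by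
    unfold dotProduct
    refine Finset.sum_congr rfl fun α _ => ?_
    rcases (hP α).eq_or_lt with h | h
    · rw [← h]; simp
    · obtain ⟨_, _, h3, _⟩ := hnewton α h
      rw [Pi.add_apply, h3]; ring
  have h3 : ∑ α, (1 - e α) * Gᵀ.mulVec vm α * P α ≤ 0 := by
    refine Finset.sum_nonpos fun α _ => ?_
    rcases (hP α).eq_or_lt with h | h
    · rw [← h]; simp
    · obtain ⟨_, h4, _, h5⟩ := hnewton α h
      exact mul_nonpos_of_nonpos_of_nonneg
        (mul_nonpos_of_nonneg_of_nonpos (sub_nonneg.2 h4) h5) h.le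
  refine ⟨by rw [h1], by rw [h1, h2], ?_⟩
  rw [h1, h2]
  linarith
end
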